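/- Let a, c, ρ*, σ̄ > 0 and let V := {(ρ, J) ∈ ℝ² : |J|/a < ρ < ρ*/2}. Define σ(x) := −σ̄·x/(x + ρ*), h(x) := x·(x + ρ*)/ρ*, and for J ∈ ℝ, F_J(x) := x − h(x)/2 + ½·√(h(x)² + (2J/a)²). Suppose ρ̂₀ : V → (0, ρ*/2) is differentiable and satisfies F_J(ρ̂₀(ρ, J)) = ρ for all (ρ, J) ∈ V. Define on V: Φ := (2J/a)/h(ρ̂₀), u := c·Φ/(1 + √(1 + Φ²)) (which equals c·tanh(½·arcsinh Φ)), p₀ := a·c·ρ̂₀²/ρ*, the flux f(ρ, J) := ((ρ + ρ̂₀²/ρ*)·u, u·J + p₀) ∈ ℝ², and the entropy η(ρ, J) := √(½·(1 + √(1 + Φ²))) · σ(ρ̂₀). Then the entropy compatibility identity D(η·u)(ρ, J) = Dη(ρ, J) ∘ Df(ρ, J) holds at every (ρ, J) ∈ V. -/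

import Mathlib

/-- Proposition 17 (homographic entropy for a "Lorentz-hyperbolic" system):
entropy compatibility identity D(ηu) = Dη ∘ Df on V. -/
theorem statement_19 (a c ρs σb : ℝ)
    (ha : 0 < a) (hc : 0 < c) (hρs : 0 < ρs) (hσb : 0 < σb)
    (V : Set (ℝ × ℝ)) (hV : V = {p : ℝ × ℝ | |p.2| / a < p.1 ∧ p.1 < ρs / 2})
    (σ h : ℝ → ℝ)
    (hσ : σ = fun x => -σb * x / (x + ρs))
    (hh : h = fun x => x * (x + ρs) / ρs)
    (F : ℝ → ℝ → ℝ)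
    (hF : F = fun J x =>
      x - h x / 2 + (1 / 2) * Real.sqrt (h x ^ 2 + (2 * J / a) ^ 2))
    (ρ₀h : ℝ × ℝ → ℝ)
    (hρ₀hd : ∀ p ∈ V, DifferentiableAt ℝ ρ₀h p)
    (hρ₀mem : ∀ p ∈ V, ρ₀h p ∈ Set.Ioo 0 (ρs / 2))
    (hρ₀eq : ∀ p ∈ V, F p.2 (ρ₀h p) = p.1)
    (Φ u p₀ : ℝ × ℝ → ℝ)
    (hΦ : Φ = fun p => (2 * p.2 / a) / h (ρ₀h p))
    (hu : u = fun p => c * Φ p / (1 + Real.sqrt (1 + Φ p ^ 2)))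
    (hp₀ : p₀ = fun p => a * c * (ρ₀h p) ^ 2 / ρs)
    (f : ℝ × ℝ → ℝ × ℝ)
    (hf : f = fun p => ((p.1 + (ρ₀h p) ^ 2 / ρs) * u p, u p * p.2 + p₀ p))
    (η : ℝ × ℝ → ℝ)
    (hη : η = fun p =>
      Real.sqrt ((1 / 2) * (1 + Real.sqrt (1 + Φ p ^ 2))) * σ (ρ₀h p)) :
    ∀ p ∈ V, fderiv ℝ (fun q => η q * u q) p = (fderiv ℝ η p).comp (fderiv ℝ f p) := by
  intro p hp
  have hVo : IsOpen V := by
    rw [hV]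
    have o1 : IsOpen {p : ℝ × ℝ | |p.2| / a < p.1} := isOpen_lt (by fun_prop) (by fun_prop)
    have o2 : IsOpen {p : ℝ × ℝ | p.1 < ρs / 2} := isOpen_lt (by fun_prop) (by fun_prop)
    exact o1.inter o2
  have hVn : ∀ᶠ q in nhds p, q ∈ V := hVo.mem_nhds hp
  have hpos : ∀ q ∈ V, 0 < ρ₀h q := fun q hq => (hρ₀mem q hq).1
  have hhpos : ∀ q ∈ V, 0 < h (ρ₀h q) := by
    intro q hq
    have := hpos q hq
    rw [hh]
    positivity
  set θ : ℝ × ℝ → ℝ := fun q => Real.arsinh (Φ q) / 2 with hθ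
  have hsinh : ∀ q, Φ q = 2 * Real.sinh (θ q) * Real.cosh (θ q) := by
    intro q
    rw [← Real.sinh_two_mul, hθ]
    simp only [mul_div_cancel₀ _ (two_ne_zero' ℝ)]
    rw [Real.sinh_arsinh]
  have hsq : ∀ q, Real.sqrt (1 + Φ q ^ 2) = 2 * Real.cosh (θ q) ^ 2 - 1 := by
    intro q
    have h1 := Real.cosh_sq (θ q)
    have h2 := Real.one_le_cosh (θ q)
    rw [Real.sqrt_eq_iff_mul_self_eq (by positivity) (by nlinarith), hsinh q]
    rw [mul_pow, mul_pow, show Real.sinh (θ q) ^ 2 = Real.cosh (θ q) ^ 2 - 1 by linarith]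
    ring
  have hu' : ∀ q, u q = c * Real.sinh (θ q) / Real.cosh (θ q) := by
    intro q
    have h2 := Real.cosh_pos (θ q)
    rw [hu]
    simp only []
    rw [hsq, hsinh]
    field_simp
    ring
  have hη' : ∀ q, η q = Real.cosh (θ q) * σ (ρ₀h q) := by
    intro q
    have h2 := Real.cosh_pos (θ q)
    rw [hη]
    simp only []
    rw [hsq, show (1 / 2) * (1 + (2 * Real.cosh (θ q) ^ 2 - 1)) = Real.cosh (θ q) ^ 2 by ring,
      Real.sqrt_sq h2.le]
  have hJ : ∀ q ∈ V, q.2 = a * (h (ρ₀h q) * (Real.sinh (θ q) * Real.cosh (θ q))) := by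
    intro q hq
    have h1 := hsinh q
    have h2 := hhpos q hq
    have h3 : Φ q = (2 * q.2 / a) / h (ρ₀h q) := by rw [hΦ]
    rw [h3] at h1
    field_simp at h1
    linarith
  have hρ : ∀ q ∈ V, q.1 = ρ₀h q + h (ρ₀h q) * Real.sinh (θ q) ^ 2 := by
    intro q hq
    have h1 := hρ₀eq q hq
    have h2 := hhpos q hq
    have h3 : 2 * q.2 / a = h (ρ₀h q) * Φ q := by
      rw [hΦ]
      field_simp
    rw [hF] at h1
    simp only [] at h1
    rw [h3, show h (ρ₀h q) ^ 2 + (h (ρ₀h q) * Φ q) ^ 2 = h (ρ₀h q) ^ 2 * (1 + Φ q ^ 2) by ring,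
      Real.sqrt_mul (by positivity), Real.sqrt_sq h2.le, hsq, Real.cosh_sq] at h1
    linarith
  have hf' : ∀ q ∈ V, f q = (c / a * q.2,
      a * c * (h (ρ₀h q) * Real.cosh (θ q) ^ 2 - ρ₀h q)) := by
    intro q hq
    have h2 := Real.cosh_pos (θ q)
    have h4 : ρ₀h q ^ 2 / ρs = h (ρ₀h q) - ρ₀h q := by
      rw [hh]
      field_simp
      ring
    have h5 := Real.cosh_sq (θ q)
    rw [hf, hp₀]
    simp only []
    rw [mul_div_assoc (a * c), h4, hu', hρ q hq, hJ q hq]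
    ext
    · simp only []
      field_simp
      rw [h5]
      ring
    · simp only []
      field_simp
      rw [h5]
      ring
  -- derivatives
  have hr := (hρ₀hd p hp).hasFDerivAt
  have hpp := hpos p hp
  have hhp := hhpos p hp
  set r' := fderiv ℝ ρ₀h p with hr'
  set h' : ℝ := (2 * ρ₀h p + ρs) / ρs with hh'
  set s : ℝ := -σb * ρs / (ρ₀h p + ρs) ^ 2 with hs
  have dh : HasDerivAt h h' (ρ₀h p) := by
    rw [hh]
    have := (((hasDerivAt_id (ρ₀h p)).mul ((hasDerivAt_id (ρ₀h p)).add_const ρs)).div_const ρs)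
    refine this.congr_deriv ?_
    simp only [h', id]
    ring
  have dσ : HasDerivAt σ s (ρ₀h p) := by
    rw [hσ]
    have := (((hasDerivAt_id (ρ₀h p)).const_mul (-σb)).div ((hasDerivAt_id (ρ₀h p)).add_const ρs)
      (by simp only [id]; positivity))
    refine this.congr_deriv ?_
    simp only [s, id]
    ring
  have hσs : σ (ρ₀h p) = h (ρ₀h p) * s := by
    rw [hσ, hh, hs]
    field_simp
  have dhr : HasFDerivAt (fun q => h (ρ₀h q)) (h' • r') p := dh.comp_hasFDerivAt p hr
  have dσr : HasFDerivAt (fun q => σ (ρ₀h q)) (s • r') p := dσ.comp_hasFDerivAt p hr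
  have hΦd : DifferentiableAt ℝ Φ p := by
    rw [hΦ]
    have d0 : DifferentiableAt ℝ (fun q : ℝ × ℝ => 2 * q.2 / a) p := by fun_prop
    simp only [div_eq_mul_inv _ (h _)]
    exact d0.mul (dhr.differentiableAt.inv hhp.ne')
  have hθd : DifferentiableAt ℝ θ p := by
    have := hΦd.arsinh
    rw [hθ]
    simp only [div_eq_mul_inv]
    exact this.mul_const _
  have dθ := hθd.hasFDerivAt
  set θ' := fderiv ℝ θ p with hθ'
  have dS := dθ.sinh
  have dC := dθ.cosh
  have e1 := (hr.add (dhr.mul (dS.pow 2))).congr_of_eventuallyEq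
    (f₁ := fun q : ℝ × ℝ => q.1) (hVn.mono hρ) |>.unique (hasFDerivAt_fst (𝕜 := ℝ))
  have e2 := ((dhr.mul (dS.mul dC)).const_mul a).congr_of_eventuallyEq
    (f₁ := fun q : ℝ × ℝ => q.2) (hVn.mono hJ) |>.unique (hasFDerivAt_snd (𝕜 := ℝ))
  have e3 := (dC.mul dσr).congr_of_eventuallyEq (f₁ := η) (Filter.Eventually.of_forall hη')
  have e4 := (((hasFDerivAt_snd (𝕜 := ℝ) (p := p)).const_mul (c / a)).prodMk
    (((dhr.mul (dC.pow 2)).sub hr).const_mul (a * c))).congr_of_eventuallyEq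
    (f₁ := f) (hVn.mono hf')
  have e5 := ((dS.mul dσr).const_mul c).congr_of_eventuallyEq (f₁ := fun q => η q * u q)
    (Filter.Eventually.of_forall fun q => by
      have h2 := Real.cosh_pos (θ q)
      simp only [hη', hu', Pi.mul_apply]
      field_simp)
  have hCS := Real.cosh_sq (θ p)
  rw [e5.fderiv, e3.fderiv, e4.fderiv]
  have e1w := fun w => DFunLike.congr_fun e1 w
  have e2w := fun w => DFunLike.congr_fun e2 w
  simp at e1w e2w
  have key : ∀ w1 w2 : ℝ, Real.cosh (θ p) * (s * r' (w1, w2))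
      + σ (ρ₀h p) * (Real.sinh (θ p) * θ' (w1, w2)) =
      s * Real.cosh (θ p) * w1 - s * Real.sinh (θ p) / a * w2 := by
    intro w1 w2
    have k1 := e1w w1 w2
    have k2 := e2w w1 w2
    have k3 : s * Real.sinh (θ p) / a * w2 = s * Real.sinh (θ p) * (w2 / a) := by ring
    have k4 : w2 / a = h (ρ₀h p) * (Real.sinh (θ p) ^ 2 + Real.cosh (θ p) ^ 2) * θ' (w1, w2)
        + Real.sinh (θ p) * Real.cosh (θ p) * (h' * r' (w1, w2)) := by
      rw [div_eq_iff ha.ne']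
      linear_combination -k2
    rw [k3, k4, hσs]
    linear_combination (-(s * h (ρ₀h p) * Real.sinh (θ p) * θ' (w1, w2))) * hCS
      + s * Real.cosh (θ p) * k1
  refine ContinuousLinearMap.ext fun v => ?_
  obtain ⟨v1, v2⟩ := v
  simp
  rw [key]
  have k2 := e2w v1 v2
  have k4 : c / a * v2 = c * (h (ρ₀h p) * (Real.sinh (θ p) ^ 2 + Real.cosh (θ p) ^ 2) * θ' (v1, v2)
        + Real.sinh (θ p) * Real.cosh (θ p) * (h' * r' (v1, v2))) := by
    rw [div_mul_eq_mul_div, div_eq_iff ha.ne']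
    linear_combination (-c) * k2
  have k5 : ∀ x, s * Real.sinh (θ p) / a * (a * c * x) = s * Real.sinh (θ p) * c * x := by
    intro x
    field_simp
  rw [k4, k5, hσs]
  linear_combination (-(c * s * h (ρ₀h p) * Real.cosh (θ p) * θ' (v1, v2))) * hCS
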